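/- arXiv:2304.00786 — 2 statements merged into one kernel-verified Lean document; each statement's English description precedes it below -/
import Mathlib

section
/- Let (G, ω, μ) be a connected, locally finite weighted graph and let d be an intrinsic pseudo metric on G with finite jump size s such that every ball B_r(x) is a finite set. Let V : G → ℝ satisfy V ≥ 0 on G and V(x) ≥ c₀ d(x,x₀)^{-α} for all x ∈ G \ B_{R₀}(x₀), for some fixed x₀ ∈ G, R₀ > 0, c₀ > 0 and α ∈ [0,1]. Suppose there exists Λ ∈ (0,1) such that ∑_{x ∈ G \ B₁(x₀)} e^{-Λ d(x,x₀)^α} μ(x) < ∞. Then every bounded function u : G → ℝ satisfying Δu(x) − V(x)u(x) = 0 for all x ∈ G is identically zero. -/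
/-!
As `t ^ α ≤ t` for `t ≥ 1`, the assumptions are weakest for `α = 1`. Since `|u|` is a subsolution,
it suffices to treat bounded functions `w ≥ 0` with `V w ≤ Δ w`; normalise `w ≤ 1`. By convexity
`w ^ n` is then a subsolution for the potential `n V`. We test it in a Caccioppoli inequality
against a weight `ψ` that is constant near `x₀` and decays like `exp (-a d(·, x₀))`. The gradient
term of `ψ` is at most `D ψ ^ 2`, which the potential `n V ≥ n c / d(·, x₀)` absorbs as long as
`d(·, x₀) < n c / D`; what remains is of order `exp (-a n c / D)`. Comparing `n`-th roots as
`n → ∞` gives `w ^ 2 ≤ exp (-a c / D) < 1` off a ball, hence everywhere by the maximum principle.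
As the bound is uniform in `w`, rescaling `w` by its supremum forces `w = 0`.
-/

open Filter Topology

section Inequalities

lemma mul_pow_mul_sub_le_pow_sub_pow {a b : ℝ} (ha : 0 ≤ a) (hb : 0 ≤ b) (n : ℕ) :
    n * a ^ (n - 1) * (b - a) ≤ b ^ n - a ^ n := by
  rcases n with _ | k
  · simp
  induction k with
  | zero => simp
  | succ k ih =>
    have hstep := mul_le_mul_of_nonneg_left ih hb
    have hsq : 0 ≤ ((k : ℝ) + 1) * a ^ k * (b - a) ^ 2 := by positivity
    simp only [Nat.add_sub_cancel] at hstep ⊢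
    push_cast at hstep ⊢
    linear_combination hstep + hsq

lemma abs_exp_sub_one_le_mul_exp_abs (t : ℝ) : |Real.exp t - 1| ≤ |t| * Real.exp |t| := by
  have := Complex.norm_exp_sub_sum_le_norm_mul_exp t 1
  simpa [← Complex.ofReal_exp, ← Complex.ofReal_one, ← Complex.ofReal_sub,
    Complex.norm_real] using this

lemma le_of_forall_nat_mul_pow_le_mul_pow {A B x ρ : ℝ} (hA : 0 < A) (hρ : 0 < ρ)
    (h : ∀ n : ℕ, n * A * x ^ n ≤ B * ρ ^ n) : x ≤ ρ := by
  by_contra! hx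
  have hB : 0 ≤ B := by simpa using h 0
  obtain ⟨n, hn⟩ := exists_nat_gt (B / A)
  have hpow : 0 < x ^ n := pow_pos (hρ.trans hx) n
  have hle : n * A * x ^ n ≤ B * x ^ n := (h n).trans (by gcongr)
  exact ((div_lt_iff₀ hA).1 hn).not_ge (le_of_mul_le_mul_right hle hpow)

end Inequalities

section CutoffWeight

variable {G : Type*} [PseudoMetricSpace G] {x₀ x y : G} {a ρ R s : ℝ}

/-- The weight used as a test function: it equals `1` on the ball of radius `ρ` around `x₀` and
decays at rate `a` outside. -/
noncomputable def cutoffWeight (x₀ : G) (a ρ : ℝ) (x : G) : ℝ :=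
  Real.exp (-(a * max (dist x x₀ - ρ) 0))

/-- The constant `D` with `(ψ x - ψ y) ^ 2 ≤ D * ψ x ^ 2 * dist x y ^ 2` whenever `dist x y ≤ s`,
for the weight `ψ` decaying at rate `a`. -/
noncomputable def cutoffConst (a s : ℝ) : ℝ :=
  (a * Real.exp (a * s)) ^ 2

/-- A bound for the squared difference quotients of `cutoffWeight x₀ a (R + s)` at distance at most
`s`. The radius `R + s` makes it vanish on the ball of radius `R`. -/
noncomputable def cutoffGradSq (x₀ : G) (a R s : ℝ) : G → ℝ :=
  {x | R ≤ dist x x₀}.indicator fun x => cutoffConst a s * cutoffWeight x₀ a (R + s) x ^ 2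

lemma cutoffConst_pos (ha : 0 < a) : 0 < cutoffConst a s := by
  unfold cutoffConst; positivity

lemma cutoffWeight_pos : 0 < cutoffWeight x₀ a ρ x :=
  Real.exp_pos _

lemma cutoffWeight_eq_one (hx : dist x x₀ ≤ ρ) : cutoffWeight x₀ a ρ x = 1 := by
  rw [cutoffWeight, max_eq_right (sub_nonpos.2 hx), mul_zero, neg_zero, Real.exp_zero]

lemma cutoffWeight_sq_le (ha : 0 ≤ a) {L : ℝ} (hL : L ≤ dist x x₀) :
    cutoffWeight x₀ a ρ x ^ 2 ≤
      Real.exp (2 * a * ρ) * Real.exp (-(a * L)) * Real.exp (-(a * dist x x₀)) := by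
  rw [cutoffWeight, ← Real.exp_nat_mul, ← Real.exp_add, ← Real.exp_add, Real.exp_le_exp]
  have hmax := mul_le_mul_of_nonneg_left (le_max_left (dist x x₀ - ρ) 0) ha
  have haL := mul_le_mul_of_nonneg_left hL ha
  push_cast
  linear_combination 2 * hmax + haL

lemma abs_exp_neg_mul_sub_le {g : G → ℝ} (hg : LipschitzWith 1 g) (ha : 0 ≤ a)
    (hxy : dist x y ≤ s) :
    |Real.exp (-(a * g x)) - Real.exp (-(a * g y))| ≤
      a * Real.exp (a * s) * Real.exp (-(a * g x)) * dist x y := by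
  have hdiff : |a * (g x - g y)| ≤ a * dist x y := by
    rw [abs_mul, abs_of_nonneg ha]
    simpa [Real.dist_eq] using mul_le_mul_of_nonneg_left (hg.dist_le_mul x y) ha
  have hfactor : Real.exp (-(a * g x)) - Real.exp (-(a * g y)) =
      -(Real.exp (-(a * g x)) * (Real.exp (a * (g x - g y)) - 1)) := by
    rw [mul_sub, ← Real.exp_add, mul_one, neg_sub]
    ring_nf
  calc |Real.exp (-(a * g x)) - Real.exp (-(a * g y))|
      = Real.exp (-(a * g x)) * |Real.exp (a * (g x - g y)) - 1| := by
        rw [hfactor, abs_neg, abs_mul, Real.abs_exp]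
    _ ≤ Real.exp (-(a * g x)) * (|a * (g x - g y)| * Real.exp |a * (g x - g y)|) := by
        gcongr; exact abs_exp_sub_one_le_mul_exp_abs _
    _ ≤ Real.exp (-(a * g x)) * (a * dist x y * Real.exp (a * s)) := by
        gcongr; exact hdiff.trans (by gcongr)
    _ = _ := by ring

lemma cutoffGradSq_nonneg : 0 ≤ cutoffGradSq x₀ a R s x :=
  Set.indicator_nonneg (fun _ _ => mul_nonneg (sq_nonneg _) (sq_nonneg _)) x

lemma cutoffGradSq_le :
    cutoffGradSq x₀ a R s x ≤ cutoffConst a s * cutoffWeight x₀ a (R + s) x ^ 2 :=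
  Set.indicator_le_self' (fun _ _ => mul_nonneg (sq_nonneg _) (sq_nonneg _)) x

lemma cutoffWeight_sub_sq_le (ha : 0 ≤ a) (hxy : dist x y ≤ s) :
    (cutoffWeight x₀ a (R + s) x - cutoffWeight x₀ a (R + s) y) ^ 2 ≤
      cutoffGradSq x₀ a R s x * dist x y ^ 2 := by
  by_cases hx : R ≤ dist x x₀
  · have hlip : LipschitzWith 1 fun x => max (dist x x₀ - (R + s)) 0 := by
      refine LipschitzWith.of_dist_le_mul fun x y => ?_
      simpa [Real.dist_eq] using (abs_max_sub_max_le_abs _ _ 0).trans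
        ((sub_sub_sub_cancel_right (dist x x₀) (dist y x₀) (R + s)).symm ▸ abs_dist_sub_le x y x₀)
    rw [cutoffGradSq, Set.indicator_of_mem (by exact hx), cutoffConst, ← mul_pow, ← mul_pow]
    exact sq_le_sq.2 ((abs_exp_neg_mul_sub_le hlip ha hxy).trans (le_abs_self _))
  · have hs : 0 ≤ s := dist_nonneg.trans hxy
    have hy : dist y x₀ ≤ R + s := by linarith [dist_triangle_left y x₀ x]
    rw [cutoffWeight_eq_one (by linarith), cutoffWeight_eq_one hy, sub_self, zero_pow two_ne_zero]
    exact mul_nonneg cutoffGradSq_nonneg (sq_nonneg _)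

lemma tendsto_cutoffWeight_cofinite (ha : 0 < a) (hfin : ∀ r, (Metric.ball x₀ r).Finite) :
    Tendsto (cutoffWeight x₀ a ρ) cofinite (𝓝 0) := by
  have hdist : Tendsto (fun x => dist x x₀) cofinite atTop :=
    tendsto_atTop.2 fun r => (hfin r).subset fun x (hx : ¬ r ≤ dist x x₀) => not_le.1 hx
  have hmax : Tendsto (fun x => max (dist x x₀ - ρ) 0) cofinite atTop :=
    tendsto_atTop_mono (fun x => le_max_left _ _) (tendsto_atTop_add_const_right _ (-ρ) hdist)
  exact Real.tendsto_exp_neg_atTop_nhds_zero.comp (hmax.const_mul_atTop ha)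

lemma div_dist_le_of_mul_dist_rpow_neg_le {V : G → ℝ} {c α : ℝ} (hc : 0 ≤ c) (hα : α ≤ 1)
    (hV : ∀ x, R ≤ dist x x₀ → c * dist x x₀ ^ (-α) ≤ V x) (x : G) (hx : max R 1 ≤ dist x x₀) :
    c / dist x x₀ ≤ V x := by
  refine le_trans ?_ (hV x ((le_max_left _ _).trans hx))
  rw [div_eq_mul_inv, ← Real.rpow_neg_one]
  gcongr
  exact (le_max_right _ _).trans hx

lemma summable_exp_neg_mul_dist_mul {m : G → ℝ} {Λ α : ℝ} (hm : ∀ x, 0 ≤ m x) (hΛ : 0 ≤ Λ)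
    (hα : α ≤ 1) (hfin : (Metric.ball x₀ 1).Finite)
    (hsum : Summable fun x : {x // 1 ≤ dist x x₀} => Real.exp (-Λ * dist x.1 x₀ ^ α) * m x) :
    Summable fun x => Real.exp (-(Λ * dist x x₀)) * m x := by
  have hcompl : {x | 1 ≤ dist x x₀}ᶜ.Finite :=
    hfin.subset fun x (hx : ¬ 1 ≤ dist x x₀) => not_le.1 hx
  rw [← hcompl.summable_compl_iff, compl_compl]
  refine hsum.of_nonneg_of_le (fun x => mul_nonneg (Real.exp_pos _).le (hm x)) fun x => ?_
  have hpow : dist x.1 x₀ ^ α ≤ dist x.1 x₀ := Real.rpow_le_self_of_one_le x.2 hα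
  refine mul_le_mul_of_nonneg_right (Real.exp_le_exp.2 ?_) (hm x)
  linarith [mul_le_mul_of_nonneg_left hpow hΛ]

end CutoffWeight

/-- A locally finite weighted graph with node measure `μ` and edge weight `ω`. The diagonal of `ω`
is unconstrained, because loops do not contribute to the Laplacian. -/
structure WeightedGraph (G : Type*) where
  μ : G → ℝ
  ω : G → G → ℝ
  μ_pos : ∀ x, 0 < μ x
  ω_symm : ∀ x y, ω x y = ω y x
  ω_nonneg : ∀ x y, 0 ≤ ω x y
  finite_adj : ∀ x, {y | 0 < ω x y}.Finite

namespace WeightedGraph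

variable {G : Type*} (Γ : WeightedGraph G)

/-- The Laplacian `Δ f` of a weighted graph. By `finite_adj` the sum is finite, so `tsum` takes no
junk value. -/
noncomputable def laplacian (f : G → ℝ) (x : G) : ℝ :=
  (Γ.μ x)⁻¹ * ∑' y, Γ.ω x y * (f y - f x)

/-- Connectedness of a weighted graph: any two vertices are joined by a finite path of edges of
positive weight. -/
def Connected : Prop :=
  ∀ x y, Relation.ReflTransGen (fun a b => 0 < Γ.ω a b) x y

/-- `w` is a subsolution of the Schrödinger equation `Δ w - V w = 0`. -/
def IsSubsolution (V w : G → ℝ) : Prop :=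
  ∀ x, V x * w x ≤ Γ.laplacian w x

/-- The pseudo metric of `G` is intrinsic: the squared edge lengths at each vertex, weighted by
`ω`, sum up to at most its measure. -/
def IsIntrinsic [PseudoMetricSpace G] : Prop :=
  ∀ x, (Γ.μ x)⁻¹ * ∑' y, Γ.ω x y * dist x y ^ 2 ≤ 1

variable {Γ}

lemma ω_eq_zero_of_not_pos {x y : G} (h : ¬ 0 < Γ.ω x y) : Γ.ω x y = 0 :=
  (not_lt.1 h).antisymm (Γ.ω_nonneg x y)

lemma connected_of_exists_path
    (h : ∀ x y : G, x ≠ y → ∃ (n : ℕ) (p : ℕ → G),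
      p 0 = x ∧ p n = y ∧ ∀ i < n, 0 < Γ.ω (p i) (p (i + 1))) : Γ.Connected := by
  intro x y
  by_cases hxy : x = y
  · exact hxy ▸ .refl
  obtain ⟨n, p, rfl, rfl, hp⟩ := h x y hxy
  exact (reflTransGen_of_succ_of_le (fun i j => 0 < Γ.ω (p i) (p j))
    (fun i hi => hp i hi.2) n.zero_le).lift p fun _ _ hij => hij

section Laplacian

lemma summable_ω_mul (f : G → ℝ) (x : G) : Summable fun y => Γ.ω x y * f y := by
  refine summable_of_hasFiniteSupport ((Γ.finite_adj x).subset fun y hy => ?_)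
  exact (Γ.ω_nonneg x y).lt_of_ne' (left_ne_zero_of_mul hy)

lemma mul_laplacian_le_laplacian {f g : G → ℝ} {x : G} {c : ℝ}
    (h : ∀ y, c * (f y - f x) ≤ g y - g x) : c * Γ.laplacian f x ≤ Γ.laplacian g x := by
  rw [laplacian, mul_left_comm, ← tsum_mul_left]
  refine mul_le_mul_of_nonneg_left ?_ (inv_nonneg.2 (Γ.μ_pos x).le)
  refine Summable.tsum_le_tsum (fun y => ?_) ((summable_ω_mul _ x).mul_left c) (summable_ω_mul _ x)
  rw [mul_left_comm]
  exact mul_le_mul_of_nonneg_left (h y) (Γ.ω_nonneg x y)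

lemma isSubsolution_abs {V u : G → ℝ} (hu : ∀ x, Γ.laplacian u x = V x * u x) :
    Γ.IsSubsolution V fun x => |u x| := by
  intro x
  rcases le_total 0 (u x) with hx | hx
  · calc V x * |u x| = 1 * Γ.laplacian u x := by rw [hu, abs_of_nonneg hx, one_mul]
      _ ≤ _ := mul_laplacian_le_laplacian fun y => by
        rw [abs_of_nonneg hx]
        linarith [le_abs_self (u y)]
  · calc V x * |u x| = -1 * Γ.laplacian u x := by rw [hu, abs_of_nonpos hx]; ring
      _ ≤ _ := mul_laplacian_le_laplacian fun y => by
        rw [abs_of_nonpos hx]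
        linarith [neg_abs_le (u y)]

namespace IsSubsolution

variable {V w : G → ℝ}

lemma const_mul (hw : Γ.IsSubsolution V w) {c : ℝ} (hc : 0 ≤ c) :
    Γ.IsSubsolution V fun x => c * w x := fun x =>
  calc V x * (c * w x) = c * (V x * w x) := by ring
    _ ≤ c * Γ.laplacian w x := by gcongr; exact hw x
    _ ≤ _ := mul_laplacian_le_laplacian fun y => (mul_sub c _ _).le

lemma pow (hw : Γ.IsSubsolution V w) (hw₀ : ∀ x, 0 ≤ w x) (n : ℕ) :
    Γ.IsSubsolution (fun x => n * V x) fun x => w x ^ n := by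
  intro x
  calc n * V x * w x ^ n = n * w x ^ (n - 1) * (V x * w x) := by
        rcases n with _ | n
        · simp
        · rw [Nat.add_sub_cancel]; ring
    _ ≤ n * w x ^ (n - 1) * Γ.laplacian w x :=
        mul_le_mul_of_nonneg_left (hw x) (mul_nonneg n.cast_nonneg (pow_nonneg (hw₀ x) _))
    _ ≤ _ := mul_laplacian_le_laplacian fun y =>
        mul_pow_mul_sub_le_pow_sub_pow (hw₀ x) (hw₀ y) n

lemma laplacian_nonneg (hw : Γ.IsSubsolution V w) (hV : ∀ x, 0 ≤ V x) (hw₀ : ∀ x, 0 ≤ w x)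
    (x : G) : 0 ≤ Γ.laplacian w x :=
  (mul_nonneg (hV x) (hw₀ x)).trans (hw x)

lemma μ_mul_le_sum (hw : Γ.IsSubsolution V w) {S : Finset G} {x : G}
    (hS : ∀ y ∉ S, Γ.ω x y = 0) :
    Γ.μ x * (V x * w x) ≤ ∑ y ∈ S, Γ.ω x y * (w y - w x) := by
  have h := (le_inv_mul_iff₀ (Γ.μ_pos x)).1 (hw x)
  rwa [tsum_eq_sum fun y hy => by rw [hS y hy, zero_mul]] at h

end IsSubsolution

end Laplacian

section MaximumPrinciple

variable {w : G → ℝ}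

lemma eq_of_laplacian_nonneg_of_adj {x y : G} (hx : 0 ≤ Γ.laplacian w x)
    (hmax : ∀ z, w z ≤ w x) (hxy : 0 < Γ.ω x y) : w y = w x := by
  have hnonneg : ∀ z, 0 ≤ Γ.ω x z * (w x - w z) := fun z =>
    mul_nonneg (Γ.ω_nonneg x z) (sub_nonneg.2 (hmax z))
  have hsum : ∑' z, Γ.ω x z * (w x - w z) ≤ 0 := by
    have h : 0 ≤ ∑' z, Γ.ω x z * (w z - w x) :=
      nonneg_of_mul_nonneg_right hx (inv_pos.2 (Γ.μ_pos x))
    rw [← neg_nonneg, ← tsum_neg]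
    simpa only [← mul_neg, neg_sub] using h
  have hterm : Γ.ω x y * (w x - w y) ≤ 0 :=
    ((summable_ω_mul _ x).le_tsum y fun z _ => hnonneg z).trans hsum
  linarith [hmax y, nonpos_of_mul_nonpos_right hterm hxy]

lemma Connected.eq_of_forall_le (hΓ : Γ.Connected) (hw : ∀ x, 0 ≤ Γ.laplacian w x) {m : G}
    (hmax : ∀ x, w x ≤ w m) (x : G) : w x = w m := by
  induction hΓ m x with
  | refl => rfl
  | tail _ hadj ih =>
    exact (eq_of_laplacian_nonneg_of_adj (hw _) (fun z => ih ▸ hmax z) hadj).trans ih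

lemma Connected.le_of_forall_notMem_le [Infinite G] (hΓ : Γ.Connected)
    (hw : ∀ x, 0 ≤ Γ.laplacian w x) {K : Set G} (hK : K.Finite) {θ : ℝ}
    (hθ : ∀ x ∉ K, w x ≤ θ) (x : G) : w x ≤ θ := by
  by_contra! hx
  have hxK : x ∈ K := by_contra fun h => (hθ x h).not_gt hx
  obtain ⟨m, -, hm⟩ := Set.exists_max_image K w hK ⟨x, hxK⟩
  have hθm : θ < w m := hx.trans_le (hm x hxK)
  have hmax : ∀ z, w z ≤ w m := fun z =>
    (em (z ∈ K)).elim (hm z) fun hz => (hθ z hz).trans hθm.le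
  obtain ⟨y, hy⟩ := hK.exists_notMem
  exact (hθ y hy).not_gt (hΓ.eq_of_forall_le hw hmax y ▸ hθm)

end MaximumPrinciple

section Caccioppoli

lemma sum_sum_ω_mul_le (S : Finset G) {f g : G → G → ℝ}
    (h : ∀ x y, f x y + f y x ≤ g x y + g y x) :
    ∑ x ∈ S, ∑ y ∈ S, Γ.ω x y * f x y ≤ ∑ x ∈ S, ∑ y ∈ S, Γ.ω x y * g x y := by
  have hsymm : ∀ f : G → G → ℝ, 2 * ∑ x ∈ S, ∑ y ∈ S, Γ.ω x y * f x y =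
      ∑ x ∈ S, ∑ y ∈ S, Γ.ω x y * (f x y + f y x) := by
    intro f
    have hswap : ∑ x ∈ S, ∑ y ∈ S, Γ.ω x y * f y x = ∑ x ∈ S, ∑ y ∈ S, Γ.ω x y * f x y := by
      rw [Finset.sum_comm]
      simp only [Γ.ω_symm]
    simp only [mul_add, Finset.sum_add_distrib, hswap, two_mul]
  refine le_of_mul_le_mul_left ?_ (two_pos (α := ℝ))
  rw [hsymm, hsymm]
  exact Finset.sum_le_sum fun x _ => Finset.sum_le_sum fun y _ =>
    mul_le_mul_of_nonneg_left (h x y) (Γ.ω_nonneg x y)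

lemma sum_sum_ω_mul_sub_mul_sq_le (S : Finset G) (v φ : G → ℝ) :
    ∑ x ∈ S, ∑ y ∈ S, Γ.ω x y * ((v y - v x) * (v x * φ x ^ 2)) ≤
      ∑ x ∈ S, ∑ y ∈ S, Γ.ω x y * (v x ^ 2 * (φ x - φ y) ^ 2 / 2) := by
  refine sum_sum_ω_mul_le S fun x y => ?_
  linear_combination sq_nonneg (v x * φ x - v y * φ y) +
    sq_nonneg ((v x - v y) * (φ x - φ y)) / 2

lemma exists_finset_support_subset {φ : G → ℝ} (hφ : φ.support.Finite) :
    ∃ S : Finset G, (∀ x ∉ S, φ x = 0) ∧ ∀ x, φ x ≠ 0 → ∀ y ∉ S, Γ.ω x y = 0 := by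
  have hfin : (φ.support ∪ ⋃ x ∈ φ.support, {y | 0 < Γ.ω x y}).Finite :=
    hφ.union (hφ.biUnion fun x _ => Γ.finite_adj x)
  refine ⟨hfin.toFinset, fun x hx => ?_, fun x hx y hy => ω_eq_zero_of_not_pos fun hpos => ?_⟩
  · by_contra h
    exact hx (hfin.mem_toFinset.2 (.inl h))
  · exact hy (hfin.mem_toFinset.2 (.inr (Set.mem_biUnion hx hpos)))

variable [PseudoMetricSpace G]

lemma IsIntrinsic.sum_le (hΓ : Γ.IsIntrinsic) (S : Finset G) (x : G) :
    ∑ y ∈ S, Γ.ω x y * dist x y ^ 2 ≤ Γ.μ x :=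
  calc ∑ y ∈ S, Γ.ω x y * dist x y ^ 2 ≤ ∑' y, Γ.ω x y * dist x y ^ 2 :=
        (summable_ω_mul _ x).sum_le_tsum S fun y _ => mul_nonneg (Γ.ω_nonneg x y) (sq_nonneg _)
    _ ≤ Γ.μ x := by simpa using (inv_mul_le_iff₀ (Γ.μ_pos x)).1 (hΓ x)

variable {W v φ E : G → ℝ}

lemma IsIntrinsic.sum_ω_mul_sq_le (hΓ : Γ.IsIntrinsic) {x : G} (hE : 0 ≤ E x)
    (hφE : ∀ y, 0 < Γ.ω x y → (φ x - φ y) ^ 2 ≤ E x * dist x y ^ 2) (S : Finset G) :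
    ∑ y ∈ S, Γ.ω x y * (v x ^ 2 * (φ x - φ y) ^ 2 / 2) ≤ v x ^ 2 * E x * Γ.μ x / 2 := by
  have hterm : ∀ y, Γ.ω x y * (φ x - φ y) ^ 2 ≤ Γ.ω x y * (E x * dist x y ^ 2) := by
    intro y
    by_cases hxy : 0 < Γ.ω x y
    · exact mul_le_mul_of_nonneg_left (hφE y hxy) hxy.le
    · simp [ω_eq_zero_of_not_pos hxy]
  calc ∑ y ∈ S, Γ.ω x y * (v x ^ 2 * (φ x - φ y) ^ 2 / 2)
      = v x ^ 2 / 2 * ∑ y ∈ S, Γ.ω x y * (φ x - φ y) ^ 2 := by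
        rw [Finset.mul_sum]; exact Finset.sum_congr rfl fun y _ => by ring
    _ ≤ v x ^ 2 / 2 * ∑ y ∈ S, Γ.ω x y * (E x * dist x y ^ 2) := by
        exact mul_le_mul_of_nonneg_left (Finset.sum_le_sum fun y _ => hterm y) (by positivity)
    _ = v x ^ 2 / 2 * E x * ∑ y ∈ S, Γ.ω x y * dist x y ^ 2 := by
        rw [Finset.mul_sum, Finset.mul_sum]; exact Finset.sum_congr rfl fun y _ => by ring
    _ ≤ v x ^ 2 / 2 * E x * Γ.μ x := by gcongr; exact hΓ.sum_le S x
    _ = _ := by ring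

lemma IsSubsolution.tsum_mul_sq_le_of_finite_support (hv : Γ.IsSubsolution W v)
    (hΓ : Γ.IsIntrinsic) (hv₀ : ∀ x, 0 ≤ v x) (hE : ∀ x, 0 ≤ E x) (hφ : φ.support.Finite)
    (hφE : ∀ x y, 0 < Γ.ω x y → (φ x - φ y) ^ 2 ≤ E x * dist x y ^ 2)
    (hsum : Summable fun x => v x ^ 2 * E x * Γ.μ x) :
    ∑' x, W x * v x ^ 2 * φ x ^ 2 * Γ.μ x ≤ (∑' x, v x ^ 2 * E x * Γ.μ x) / 2 := by
  obtain ⟨S, hφS, hωS⟩ := exists_finset_support_subset (Γ := Γ) hφ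
  have htest : ∀ x, W x * v x ^ 2 * φ x ^ 2 * Γ.μ x ≤
      ∑ y ∈ S, Γ.ω x y * ((v y - v x) * (v x * φ x ^ 2)) := by
    intro x
    by_cases hx : φ x = 0
    · simp [hx]
    calc W x * v x ^ 2 * φ x ^ 2 * Γ.μ x = Γ.μ x * (W x * v x) * (v x * φ x ^ 2) := by ring
      _ ≤ (∑ y ∈ S, Γ.ω x y * (v y - v x)) * (v x * φ x ^ 2) :=
          mul_le_mul_of_nonneg_right (hv.μ_mul_le_sum (hωS x hx))
            (mul_nonneg (hv₀ x) (sq_nonneg _))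
      _ = _ := by simp only [Finset.sum_mul, mul_assoc]
  calc ∑' x, W x * v x ^ 2 * φ x ^ 2 * Γ.μ x
      = ∑ x ∈ S, W x * v x ^ 2 * φ x ^ 2 * Γ.μ x :=
        tsum_eq_sum fun x hx => by simp [hφS x hx]
    _ ≤ ∑ x ∈ S, ∑ y ∈ S, Γ.ω x y * ((v y - v x) * (v x * φ x ^ 2)) :=
        Finset.sum_le_sum fun x _ => htest x
    _ ≤ ∑ x ∈ S, ∑ y ∈ S, Γ.ω x y * (v x ^ 2 * (φ x - φ y) ^ 2 / 2) :=
        sum_sum_ω_mul_sub_mul_sq_le S v φ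
    _ ≤ ∑ x ∈ S, v x ^ 2 * E x * Γ.μ x / 2 :=
        Finset.sum_le_sum fun x _ => hΓ.sum_ω_mul_sq_le (hE x) (hφE x) S
    _ ≤ _ := by
        rw [← Finset.sum_div]
        gcongr
        exact hsum.sum_le_tsum S fun x _ =>
          mul_nonneg (mul_nonneg (sq_nonneg _) (hE x)) (Γ.μ_pos x).le

lemma IsSubsolution.sum_mul_sq_le_of_tendsto_zero (hv : Γ.IsSubsolution W v)
    (hΓ : Γ.IsIntrinsic) (hW : ∀ x, 0 ≤ W x) (hv₀ : ∀ x, 0 ≤ v x) (hE : ∀ x, 0 ≤ E x)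
    (hφ₀ : ∀ x, 0 ≤ φ x) (hφ : Tendsto φ cofinite (𝓝 0))
    (hφE : ∀ x y, 0 < Γ.ω x y → (φ x - φ y) ^ 2 ≤ E x * dist x y ^ 2)
    (hsum : Summable fun x => v x ^ 2 * E x * Γ.μ x) (F : Finset G) :
    ∑ x ∈ F, W x * v x ^ 2 * φ x ^ 2 * Γ.μ x ≤ (∑' x, v x ^ 2 * E x * Γ.μ x) / 2 := by
  -- The truncations `max (φ - ε) 0` have finite support and smaller increments than `φ`.
  have htrunc : ∀ ε > 0, ∑ x ∈ F, W x * v x ^ 2 * max (φ x - ε) 0 ^ 2 * Γ.μ x ≤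
      (∑' x, v x ^ 2 * E x * Γ.μ x) / 2 := by
    intro ε hε
    have hsupp : (Function.support fun x => max (φ x - ε) 0).Finite := by
      refine Set.Finite.subset (hφ.eventually_lt_const hε) fun x hx hlt => hx ?_
      exact max_eq_right (sub_nonpos.2 hlt.le)
    have hincr : ∀ x y, 0 < Γ.ω x y →
        (max (φ x - ε) 0 - max (φ y - ε) 0) ^ 2 ≤ E x * dist x y ^ 2 := by
      refine fun x y hxy => (sq_le_sq.2 ?_).trans (hφE x y hxy)
      simpa only [sub_sub_sub_cancel_right] using abs_max_sub_max_le_abs (φ x - ε) (φ y - ε) 0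
    refine le_trans (Summable.sum_le_tsum F (fun x _ => ?_) ?_)
      (hv.tsum_mul_sq_le_of_finite_support hΓ hv₀ hE hsupp hincr hsum)
    · have := hW x
      have := (Γ.μ_pos x).le
      positivity
    · exact summable_of_hasFiniteSupport (hsupp.subset fun x hx h => hx (by simp_all))
  have hcont : Continuous fun ε : ℝ =>
      ∑ x ∈ F, W x * v x ^ 2 * max (φ x - ε) 0 ^ 2 * Γ.μ x := by fun_prop
  have hlim := (hcont.tendsto 0).mono_left (nhdsWithin_le_nhds (s := Set.Ioi 0))
  simp only [sub_zero, max_eq_left (hφ₀ _)] at hlim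
  exact le_of_tendsto hlim (eventually_of_mem self_mem_nhdsWithin htrunc)

end Caccioppoli

section Liouville

variable [PseudoMetricSpace G] {V W v w : G → ℝ} {x₀ : G} {R a c s : ℝ}

lemma mul_cutoffGradSq_le_add (ha : 0 < a) (hR : 0 < R) (hv₀ : ∀ x, 0 ≤ v x)
    (hv₁ : ∀ x, v x ≤ 1) (hW : ∀ x, 0 ≤ W x)
    (hWc : ∀ x, R ≤ dist x x₀ → c / dist x x₀ ≤ W x) (x : G) :
    v x ^ 2 * cutoffGradSq x₀ a R s x ≤
      W x * v x ^ 2 * cutoffWeight x₀ a (R + s) x ^ 2 +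
        cutoffConst a s * (Real.exp (2 * a * (R + s)) *
          Real.exp (-(a * (c / cutoffConst a s))) * Real.exp (-(a * dist x x₀))) := by
  have hD : 0 < cutoffConst a s := cutoffConst_pos ha
  have habs : 0 ≤ W x * v x ^ 2 * cutoffWeight x₀ a (R + s) x ^ 2 := by
    have := hW x
    positivity
  rcases lt_or_ge (dist x x₀) (c / cutoffConst a s) with hnear | hfar
  · refine le_add_of_le_of_nonneg ?_ (by positivity)
    by_cases hx : R ≤ dist x x₀
    · have hDW : cutoffConst a s ≤ W x := by
        refine le_trans ?_ (hWc x hx)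
        rw [le_div_iff₀ (hR.trans_le hx), mul_comm]
        exact ((lt_div_iff₀ hD).1 hnear).le
      rw [cutoffGradSq, Set.indicator_of_mem (by exact hx), mul_left_comm, mul_assoc]
      exact mul_le_mul_of_nonneg_right hDW (by positivity)
    · rwa [cutoffGradSq, Set.indicator_of_notMem (by exact hx), mul_zero]
  · refine le_add_of_nonneg_of_le habs ?_
    calc v x ^ 2 * cutoffGradSq x₀ a R s x ≤ cutoffGradSq x₀ a R s x :=
          mul_le_of_le_one_left cutoffGradSq_nonneg (pow_le_one₀ (hv₀ x) (hv₁ x))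
      _ ≤ cutoffConst a s * cutoffWeight x₀ a (R + s) x ^ 2 := cutoffGradSq_le
      _ ≤ _ := by gcongr; exact cutoffWeight_sq_le ha.le hfar

lemma summable_mul_cutoffGradSq (ha : 0 ≤ a) (hv₀ : ∀ x, 0 ≤ v x) (hv₁ : ∀ x, v x ≤ 1)
    (hsum : Summable fun x => Real.exp (-(a * dist x x₀)) * Γ.μ x) :
    Summable fun x => v x ^ 2 * cutoffGradSq x₀ a R s x * Γ.μ x := by
  refine (hsum.mul_left (cutoffConst a s * Real.exp (2 * a * (R + s)))).of_nonneg_of_le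
    (fun x => mul_nonneg (mul_nonneg (sq_nonneg _) cutoffGradSq_nonneg) (Γ.μ_pos x).le)
    fun x => ?_
  rw [← mul_assoc]
  refine mul_le_mul_of_nonneg_right ?_ (Γ.μ_pos x).le
  calc v x ^ 2 * cutoffGradSq x₀ a R s x ≤ cutoffGradSq x₀ a R s x :=
        mul_le_of_le_one_left cutoffGradSq_nonneg (pow_le_one₀ (hv₀ x) (hv₁ x))
    _ ≤ cutoffConst a s * cutoffWeight x₀ a (R + s) x ^ 2 := cutoffGradSq_le
    _ ≤ cutoffConst a s * (Real.exp (2 * a * (R + s)) * Real.exp (-(a * 0)) *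
          Real.exp (-(a * dist x x₀))) :=
        mul_le_mul_of_nonneg_left (cutoffWeight_sq_le ha dist_nonneg) (sq_nonneg _)
    _ = _ := by rw [mul_zero, neg_zero, Real.exp_zero, mul_one, ← mul_assoc]

lemma IsSubsolution.mul_cutoffWeight_sq_le (hv : Γ.IsSubsolution W v) (hΓ : Γ.IsIntrinsic)
    (hs : ∀ x y, 0 < Γ.ω x y → dist x y ≤ s) (hfin : ∀ r, (Metric.ball x₀ r).Finite)
    (ha : 0 < a) (hR : 0 < R) (hv₀ : ∀ x, 0 ≤ v x) (hv₁ : ∀ x, v x ≤ 1) (hW : ∀ x, 0 ≤ W x)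
    (hWc : ∀ x, R ≤ dist x x₀ → c / dist x x₀ ≤ W x)
    (hsum : Summable fun x => Real.exp (-(a * dist x x₀)) * Γ.μ x) (x : G) :
    W x * v x ^ 2 * cutoffWeight x₀ a (R + s) x ^ 2 * Γ.μ x ≤
      cutoffConst a s * (Real.exp (2 * a * (R + s)) * Real.exp (-(a * (c / cutoffConst a s)))) *
        ∑' y, Real.exp (-(a * dist y x₀)) * Γ.μ y := by
  set P := cutoffConst a s *
    (Real.exp (2 * a * (R + s)) * Real.exp (-(a * (c / cutoffConst a s)))) with hP
  set f : G → ℝ := fun y => W y * v y ^ 2 * cutoffWeight x₀ a (R + s) y ^ 2 * Γ.μ y with hf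
  set e : G → ℝ := fun y => v y ^ 2 * cutoffGradSq x₀ a R s y * Γ.μ y
  have hf₀ : ∀ y, 0 ≤ f y := fun y =>
    mul_nonneg (mul_nonneg (mul_nonneg (hW y) (sq_nonneg _)) (sq_nonneg _)) (Γ.μ_pos y).le
  have he_sum : Summable e := summable_mul_cutoffGradSq ha.le hv₀ hv₁ hsum
  have hcacc : ∀ F : Finset G, ∑ y ∈ F, f y ≤ (∑' y, e y) / 2 :=
    hv.sum_mul_sq_le_of_tendsto_zero hΓ hW hv₀ (fun _ => cutoffGradSq_nonneg)
      (fun _ => cutoffWeight_pos.le) (tendsto_cutoffWeight_cofinite ha hfin)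
      (fun y z hyz => cutoffWeight_sub_sq_le ha.le (hs y z hyz)) he_sum
  have hf_sum : Summable f := summable_of_sum_le hf₀ hcacc
  have hsplit : ∀ y, e y ≤ f y + P * (Real.exp (-(a * dist y x₀)) * Γ.μ y) := by
    intro y
    refine (mul_le_mul_of_nonneg_right
      (mul_cutoffGradSq_le_add ha hR hv₀ hv₁ hW hWc y) (Γ.μ_pos y).le).trans_eq ?_
    rw [hP, hf]
    ring
  have habsorb : ∑' y, e y ≤ ∑' y, f y + P * ∑' y, Real.exp (-(a * dist y x₀)) * Γ.μ y := by
    rw [← tsum_mul_left, ← hf_sum.tsum_add (hsum.mul_left P)]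
    exact he_sum.tsum_le_tsum hsplit (hf_sum.add (hsum.mul_left P))
  have hfx : f x ≤ ∑' y, f y := hf_sum.le_tsum x fun y _ => hf₀ y
  linarith [hf_sum.tsum_le_of_sum_le hcacc]

lemma IsSubsolution.sq_le_exp (hw : Γ.IsSubsolution V w) (hΓ : Γ.IsIntrinsic)
    (hs : ∀ x y, 0 < Γ.ω x y → dist x y ≤ s) (hfin : ∀ r, (Metric.ball x₀ r).Finite)
    (ha : 0 < a) (hR : 0 < R) (hc : 0 < c) (hw₀ : ∀ x, 0 ≤ w x) (hw₁ : ∀ x, w x ≤ 1)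
    (hV : ∀ x, 0 ≤ V x) (hVc : ∀ x, R ≤ dist x x₀ → c / dist x x₀ ≤ V x)
    (hsum : Summable fun x => Real.exp (-(a * dist x x₀)) * Γ.μ x) {x : G}
    (hx : R ≤ dist x x₀) : w x ^ 2 ≤ Real.exp (-(a * (c / cutoffConst a s))) := by
  have hVx : 0 < V x := (div_pos hc (hR.trans_le hx)).trans_le (hVc x hx)
  refine le_of_forall_nat_mul_pow_le_mul_pow
    (A := V x * cutoffWeight x₀ a (R + s) x ^ 2 * Γ.μ x)
    (B := cutoffConst a s * Real.exp (2 * a * (R + s)) *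
      ∑' y, Real.exp (-(a * dist y x₀)) * Γ.μ y)
    (mul_pos (mul_pos hVx (pow_pos cutoffWeight_pos 2)) (Γ.μ_pos x)) (Real.exp_pos _) fun n => ?_
  have hnV : ∀ y, R ≤ dist y x₀ → n * c / dist y x₀ ≤ n * V y := fun y hy => by
    rw [mul_div_assoc]
    exact mul_le_mul_of_nonneg_left (hVc y hy) n.cast_nonneg
  have hbound := (hw.pow hw₀ n).mul_cutoffWeight_sq_le hΓ hs hfin ha hR
    (fun y => pow_nonneg (hw₀ y) n) (fun y => pow_le_one₀ (hw₀ y) (hw₁ y))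
    (fun y => mul_nonneg n.cast_nonneg (hV y)) hnV hsum x
  have hexp : Real.exp (-(a * (n * c / cutoffConst a s))) =
      Real.exp (-(a * (c / cutoffConst a s))) ^ n := by
    rw [← Real.exp_nat_mul]
    ring_nf
  rw [hexp] at hbound
  calc _ = n * V x * (w x ^ n) ^ 2 * cutoffWeight x₀ a (R + s) x ^ 2 * Γ.μ x := by ring
    _ ≤ _ := hbound
    _ = _ := by ring

lemma exists_lt_one_forall_isSubsolution_le [Infinite G] (hconn : Γ.Connected)
    (hΓ : Γ.IsIntrinsic) (hs : ∀ x y, 0 < Γ.ω x y → dist x y ≤ s)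
    (hfin : ∀ r, (Metric.ball x₀ r).Finite) (ha : 0 < a) (hc : 0 < c) (hV : ∀ x, 0 ≤ V x)
    (hVc : ∀ x, R ≤ dist x x₀ → c / dist x x₀ ≤ V x)
    (hsum : Summable fun x => Real.exp (-(a * dist x x₀)) * Γ.μ x) :
    ∃ r < 1, ∀ w, Γ.IsSubsolution V w → (∀ x, 0 ≤ w x) → (∀ x, w x ≤ 1) → ∀ x, w x ≤ r := by
  have hq : Real.exp (-(a * (c / cutoffConst a s))) < 1 :=
    Real.exp_lt_one_iff.2 (neg_neg_of_pos (mul_pos ha (div_pos hc (cutoffConst_pos ha))))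
  refine ⟨_, (Real.sqrt_lt' one_pos).2 (hq.trans_eq (one_pow 2).symm), fun w hw hw₀ hw₁ => ?_⟩
  refine hconn.le_of_forall_notMem_le (hw.laplacian_nonneg hV hw₀) (hfin (max R 1)) fun x hx => ?_
  exact Real.le_sqrt_of_sq_le <| hw.sq_le_exp hΓ hs hfin ha (lt_max_of_lt_right one_pos) hc hw₀ hw₁
    hV (fun y hy => hVc y ((le_max_left _ _).trans hy)) hsum (not_lt.1 hx)

theorem IsSubsolution.nonpos [Infinite G] (hw : Γ.IsSubsolution V w) (hconn : Γ.Connected)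
    (hΓ : Γ.IsIntrinsic) (hs : ∀ x y, 0 < Γ.ω x y → dist x y ≤ s)
    (hfin : ∀ r, (Metric.ball x₀ r).Finite) (ha : 0 < a) (hc : 0 < c) (hV : ∀ x, 0 ≤ V x)
    (hVc : ∀ x, R ≤ dist x x₀ → c / dist x x₀ ≤ V x)
    (hsum : Summable fun x => Real.exp (-(a * dist x x₀)) * Γ.μ x) (hw₀ : ∀ x, 0 ≤ w x)
    (hbdd : BddAbove (Set.range w)) (x : G) : w x ≤ 0 := by
  obtain ⟨r, hr, hcontract⟩ :=
    exists_lt_one_forall_isSubsolution_le hconn hΓ hs hfin ha hc hV hVc hsum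
  have hle : ∀ y, w y ≤ ⨆ z, w z := le_ciSup hbdd
  by_contra! hx
  have hM : 0 < ⨆ z, w z := hx.trans_le (hle x)
  have hscaled : ∀ y, (⨆ z, w z)⁻¹ * w y ≤ r :=
    hcontract _ (hw.const_mul (inv_pos.2 hM).le)
      (fun y => mul_nonneg (inv_pos.2 hM).le (hw₀ y)) fun y => (inv_mul_le_one₀ hM).2 (hle y)
  have hM_le : ⨆ z, w z ≤ (⨆ z, w z) * r :=
    ciSup_le fun y => (inv_mul_le_iff₀ hM).1 (hscaled y)
  exact (mul_lt_of_lt_one_right hM hr).not_ge hM_le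

end Liouville

end WeightedGraph

theorem stmt0_general {G : Type*} [Infinite G] [PseudoMetricSpace G] (Γ : WeightedGraph G)
    (hconn : Γ.Connected) (hΓ : Γ.IsIntrinsic) {s : ℝ}
    (hs : ∀ x y, 0 < Γ.ω x y → dist x y ≤ s) {x₀ : G} (hfin : ∀ r, (Metric.ball x₀ r).Finite)
    {V : G → ℝ} {R c a : ℝ} (hc : 0 < c) (hV : ∀ x, 0 ≤ V x)
    (hVc : ∀ x, R ≤ dist x x₀ → c / dist x x₀ ≤ V x) (ha : 0 < a)
    (hsum : Summable fun x => Real.exp (-(a * dist x x₀)) * Γ.μ x) {u : G → ℝ}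
    (hbdd : ∃ C, ∀ x, |u x| ≤ C) (hu : ∀ x, Γ.laplacian u x = V x * u x) (x : G) : u x = 0 :=
  abs_nonpos_iff.1 <| (WeightedGraph.isSubsolution_abs hu).nonpos hconn hΓ hs hfin ha hc hV hVc
    hsum (fun _ => abs_nonneg _) (hbdd.imp fun _ hC => Set.forall_mem_range.2 hC) x

/-- **Liouville theorem for Δu − Vu = 0 on infinite graphs** (Theorem 2.4).
Under the standing assumptions on the weighted graph `(G, ω, μ)`, on the intrinsic
pseudo metric `d` with finite jump size `s` and finite balls, and under the lower
bound `V(x) ≥ c₀ d(x,x₀)^{-α}` outside `B_{R₀}(x₀)` together with the summability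
condition `∑_{x ∉ B₁(x₀)} e^{-Λ d(x,x₀)^α} μ(x) < ∞`, every bounded solution of
`Δu − Vu = 0` vanishes identically. -/
theorem stmt0 {G : Type*} [Countable G] [Infinite G]
    (μ : G → ℝ) (ω : G → G → ℝ) (d : G → G → ℝ)
    (hμ : ∀ x, 0 < μ x)
    (hω_symm : ∀ x y, ω x y = ω y x)
    (hω_diag : ∀ x, ω x x = 0)
    (hω_nonneg : ∀ x y, 0 ≤ ω x y)
    (hω_sum : ∀ x, Summable fun y => ω x y)
    (hloc : ∀ x : G, {y : G | 0 < ω x y}.Finite)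
    (hconn : ∀ x y : G, x ≠ y → ∃ (n : ℕ) (p : ℕ → G),
      p 0 = x ∧ p n = y ∧ ∀ i < n, 0 < ω (p i) (p (i + 1)))
    (hd_symm : ∀ x y, d x y = d y x)
    (hd_diag : ∀ x, d x x = 0)
    (hd_nonneg : ∀ x y, 0 ≤ d x y)
    (hd_tri : ∀ x y z, d x y ≤ d x z + d z y)
    (s : ℝ) (hs : ∀ x y, 0 < ω x y → d x y ≤ s)
    (hballs : ∀ (x : G) (r : ℝ), {y : G | d y x < r}.Finite)
    (hintr : ∀ x : G, (μ x)⁻¹ * ∑' y, ω x y * d x y ^ 2 ≤ 1)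
    (V : G → ℝ) (x₀ : G) (R₀ c₀ α : ℝ)
    (hR₀ : 0 < R₀) (hc₀ : 0 < c₀) (hα₀ : 0 ≤ α) (hα₁ : α ≤ 1)
    (hV₀ : ∀ x, 0 ≤ V x)
    (hVlow : ∀ x : G, R₀ ≤ d x x₀ → c₀ * d x x₀ ^ (-α) ≤ V x)
    (Λ : ℝ) (hΛ₀ : 0 < Λ) (hΛ₁ : Λ < 1)
    (hsum : Summable fun x : {x : G // 1 ≤ d x x₀} =>
      Real.exp (-Λ * d x.1 x₀ ^ α) * μ x.1) :
    ∀ u : G → ℝ, (∃ C : ℝ, ∀ x, |u x| ≤ C) →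
      (∀ x : G, (μ x)⁻¹ * (∑' y, ω x y * (u y - u x)) - V x * u x = 0) →
      ∀ x : G, u x = 0 := by
  let _ : PseudoMetricSpace G :=
    { dist := d
      dist_self := hd_diag
      dist_comm := hd_symm
      dist_triangle := fun x y z => hd_tri x z y }
  exact fun u hbdd hu =>
    stmt0_general ⟨μ, ω, hμ, hω_symm, hω_nonneg, hloc⟩
      (WeightedGraph.connected_of_exists_path hconn) hintr hs (hballs x₀) hc₀ hV₀
      (div_dist_le_of_mul_dist_rpow_neg_le hc₀.le hα₁ hVlow) hΛ₀
      (summable_exp_neg_mul_dist_mul (fun x => (hμ x).le) hΛ₀.le hα₁ (hballs x₀ 1) hsum)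
      hbdd fun x => sub_eq_zero.1 (hu x)
end

section
/- Let (G, ω, μ) be a connected, locally finite weighted graph with a pseudo metric d of finite jump size whose balls are finite sets, and let V : G → ℝ with V ≥ 0. Let u : G → ℝ satisfy Δu − Vu = 0 on G and 0 ≤ u ≤ 1, let T > 0, and set v(x,t) := e^t u(x) − 1 for (x,t) ∈ G × [0,T]. Let η : G → ℝ with η ≥ 0 and finite support, and let ξ : G × [0,T] → ℝ with ξ(x,·) ∈ C¹([0,T]) for every x ∈ G, such that (η²(y) − η²(x))(e^{ξ(y,t)} − e^{ξ(x,t)}) ≥ 0 for all x, y ∈ G with x ∼ y and all t ∈ [0,T]. Then ∑_{x∈G} V(x) η²(x) v₊²(x,T) e^{ξ(x,T)} μ(x) − ∑_{x∈G} V(x) η²(x) v₊²(x,0) e^{ξ(x,0)} μ(x) ≤ ∫₀^T ∑_{x∈G} v₊²(x,t) η²(x) e^{ξ(x,t)} { V(x) ξ_t(x,t) μ(x) + (1/2) ∑_{y∈G} ω(x,y)(1 − e^{ξ(y,t) − ξ(x,t)})² } dt + 2 ∫₀^T ∑_{x,y∈G} v₊²(x,t) e^{ξ(y,t)} (η(y)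 − η(x))² ω(x,y) dt, where v₊ = max{v, 0}. -/
open MeasureTheory

/-!
The function `v = eᵗ u - 1` solves the parabolic equation `V ∂ₜv = Δv`, and the estimate is a
Caccioppoli inequality for the subsolutions of this equation. Testing with `η² e^ξ v₊` gives
`∂ₜ ∑ V η² v₊² e^ξ μ ≤ ∑ V η² v₊² e^ξ ξₜ μ + 2 ∑ η² e^ξ v₊ Δv μ`, and `v₊ Δv ≤ v₊ Δv₊`. After
symmetrization over the edges, Young's inequality bounds the last sum; the terms `(v₊(y) - v₊(x))²`
which it produces are absorbed because `η²` and `e^ξ` vary in the same direction along every edge.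
-/

theorem hasDerivAt_sq_max_zero (x : ℝ) :
    HasDerivAt (fun y : ℝ => max y 0 ^ 2) (2 * max x 0) x := by
  have taylor (y : ℝ) : 0 ≤ max y 0 ^ 2 - max x 0 ^ 2 - (y - x) * (2 * max x 0) ∧
      max y 0 ^ 2 - max x 0 ^ 2 - (y - x) * (2 * max x 0) ≤ (y - x) ^ 2 := by
    rcases max_cases x 0 with ⟨hx, _⟩ | ⟨hx, _⟩ <;> rcases max_cases y 0 with ⟨hy, _⟩ | ⟨hy, _⟩ <;>
      rw [hx, hy] <;> constructor <;> nlinarith [sq_nonneg (y - x)]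
  rw [hasDerivAt_iff_isLittleO]
  refine Asymptotics.IsBigO.trans_isLittleO (.of_bound 1 (.of_forall fun y => ?_))
    (Asymptotics.isLittleO_pow_sub_sub x one_lt_two)
  simpa only [smul_eq_mul, Real.norm_eq_abs, one_mul, abs_of_nonneg (taylor y).1, abs_pow,
    sq_abs] using (taylor y).2

section Edges

variable {𝕜 : Type*} [Field 𝕜] [LinearOrder 𝕜] [IsStrictOrderedRing 𝕜]

theorem max_zero_mul_sub_le (a b : 𝕜) :
    max a 0 * (b - a) ≤ max a 0 * (max b 0 - max a 0) := by
  rcases max_cases a 0 with ⟨ha, _⟩ | ⟨ha, _⟩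
  · rw [ha]
    gcongr
    exact le_max_left b 0
  · simp only [ha, zero_mul, le_refl]

theorem sq_mul_mul_sub_mul_le {A : 𝕜} (hA : 0 < A) (a B p D : 𝕜) :
    a ^ 2 * p * (A - B) * D ≤
      1 / 2 * (p ^ 2 * a ^ 2 * A * (1 - B / A) ^ 2) + 1 / 2 * (a ^ 2 * A * D ^ 2) := by
  have young : 0 ≤ a ^ 2 * A * (p * (1 - B / A) - D) ^ 2 := by positivity
  have weight : A * (1 - B / A) = A - B := by field_simp
  rw [← weight]
  linarith

theorem mul_sq_sub_sq_mul_le {B : 𝕜} (hB : 0 ≤ B) (a b p D : 𝕜) :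
    B * p * (a ^ 2 - b ^ 2) * D ≤
      2 * (p ^ 2 * B * (b - a) ^ 2) + 1 / 8 * (B * (a + b) ^ 2 * D ^ 2) := by
  have young : 0 ≤ B * (4 * p * (a - b) - (a + b) * D) ^ 2 := by positivity
  linarith

theorem caccioppoli_edge_le {a b A B : 𝕜} (hA : 0 < A) (hB : 0 < B)
    (hmono : 0 ≤ (b ^ 2 - a ^ 2) * (B - A)) (p q : 𝕜) :
    2 * (a ^ 2 * A * (p * (q - p))) + 2 * (b ^ 2 * B * (q * (p - q))) ≤
      (1 / 2 * (p ^ 2 * a ^ 2 * A * (1 - B / A) ^ 2) + 2 * (p ^ 2 * B * (b - a) ^ 2)) +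
      (1 / 2 * (q ^ 2 * b ^ 2 * B * (1 - A / B) ^ 2) + 2 * (q ^ 2 * A * (a - b) ^ 2)) := by
  have absorb : (A + B) * (a + b) ^ 2 ≤ 4 * (a ^ 2 * A + b ^ 2 * B) := by
    calc
      (A + B) * (a + b) ^ 2 ≤ (A + B) * (2 * (a ^ 2 + b ^ 2)) := by
        gcongr
        exact add_sq_le.trans_eq (by ring)
      _ ≤ 4 * (a ^ 2 * A + b ^ 2 * B) := by linarith [hmono]
  calc
    2 * (a ^ 2 * A * (p * (q - p))) + 2 * (b ^ 2 * B * (q * (p - q)))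
      = a ^ 2 * p * (A - B) * (q - p) + b ^ 2 * q * (B - A) * (p - q)
        + (B * p * (a ^ 2 - b ^ 2) * (q - p) + A * q * (b ^ 2 - a ^ 2) * (p - q))
        - (a ^ 2 * A + b ^ 2 * B) * (q - p) ^ 2 := by ring
    _ ≤ _ := by
      linarith [sq_mul_mul_sub_mul_le hA a B p (q - p), sq_mul_mul_sub_mul_le hB b A q (p - q),
        mul_sq_sub_sq_mul_le hB.le a b p (q - p), mul_sq_sub_sq_mul_le hA.le b a q (p - q),
        mul_le_mul_of_nonneg_right absorb (sq_nonneg (q - p))]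

end Edges

theorem sum_sum_le_sum_sum_of_add_swap_le {ι M : Type*} [AddCommMonoid M] [LinearOrder M]
    [IsOrderedCancelAddMonoid M] {S : Finset ι} {f g : ι → ι → M}
    (h : ∀ x ∈ S, ∀ y ∈ S, f x y + f y x ≤ g x y + g y x) :
    ∑ x ∈ S, ∑ y ∈ S, f x y ≤ ∑ x ∈ S, ∑ y ∈ S, g x y := by
  have sum_add_swap (k : ι → ι → M) :
      ∑ x ∈ S, ∑ y ∈ S, (k x y + k y x) = 2 • ∑ x ∈ S, ∑ y ∈ S, k x y := by
    simp only [Finset.sum_add_distrib, two_nsmul]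
    rw [Finset.sum_comm (f := fun x y => k y x)]
  refine le_of_nsmul_le_nsmul_right two_ne_zero ?_
  rw [← sum_add_swap f, ← sum_add_swap g]
  exact Finset.sum_le_sum fun x hx => Finset.sum_le_sum fun y hy => h x hx y hy

section FixedTime

variable {G 𝕜 : Type*} [Field 𝕜] [LinearOrder 𝕜] [IsStrictOrderedRing 𝕜] {S : Finset G}
  {ω : G → G → 𝕜} {η E : G → 𝕜}

theorem caccioppoli_sum_le (hω_symm : ∀ x y, ω x y = ω y x) (hω_nonneg : ∀ x y, 0 ≤ ω x y)
    (hE : ∀ x, 0 < E x) (hmono : ∀ x y, 0 < ω x y → 0 ≤ (η y ^ 2 - η x ^ 2) * (E y - E x))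
    (p : G → 𝕜) :
    ∑ x ∈ S, ∑ y ∈ S, ω x y * (2 * (η x ^ 2 * E x * (p x * (p y - p x)))) ≤
      (∑ x ∈ S, p x ^ 2 * η x ^ 2 * E x * (1 / 2 * ∑ y ∈ S, ω x y * (1 - E y / E x) ^ 2))
      + 2 * ∑ x ∈ S, ∑ y ∈ S, p x ^ 2 * E y * (η y - η x) ^ 2 * ω x y := by
  calc
    ∑ x ∈ S, ∑ y ∈ S, ω x y * (2 * (η x ^ 2 * E x * (p x * (p y - p x))))
      ≤ ∑ x ∈ S, ∑ y ∈ S, ω x y * (1 / 2 * (p x ^ 2 * η x ^ 2 * E x * (1 - E y / E x) ^ 2)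
          + 2 * (p x ^ 2 * E y * (η y - η x) ^ 2)) := by
        refine sum_sum_le_sum_sum_of_add_swap_le fun x _ y _ => ?_
        rcases (hω_nonneg x y).eq_or_lt with hxy | hxy
        · simp only [hω_symm y x, ← hxy, zero_mul, le_refl]
        · rw [hω_symm y x]
          linarith [mul_le_mul_of_nonneg_left
            (caccioppoli_edge_le (hE x) (hE y) (hmono x y hxy) (p x) (p y)) hxy.le]
    _ = _ := by
        simp only [Finset.mul_sum, ← Finset.sum_add_distrib]
        exact Finset.sum_congr rfl fun x _ => Finset.sum_congr rfl fun y _ => by ring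

theorem caccioppoli_sum_max_zero_le_of_subsolution (hω_symm : ∀ x y, ω x y = ω y x)
    (hω_nonneg : ∀ x y, 0 ≤ ω x y) (hE : ∀ x, 0 < E x)
    (hmono : ∀ x y, 0 < ω x y → 0 ≤ (η y ^ 2 - η x ^ 2) * (E y - E x)) {m v v' : G → 𝕜}
    (hv : ∀ x, η x ≠ 0 → m x * v' x ≤ ∑ y ∈ S, ω x y * (v y - v x)) :
    ∑ x ∈ S, η x ^ 2 * E x * (2 * max (v x) 0) * (m x * v' x) ≤
      (∑ x ∈ S, max (v x) 0 ^ 2 * η x ^ 2 * E x *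
        (1 / 2 * ∑ y ∈ S, ω x y * (1 - E y / E x) ^ 2))
      + 2 * ∑ x ∈ S, ∑ y ∈ S, max (v x) 0 ^ 2 * E y * (η y - η x) ^ 2 * ω x y := by
  refine le_trans (Finset.sum_le_sum fun x _ => ?_)
    (caccioppoli_sum_le hω_symm hω_nonneg hE hmono fun x => max (v x) 0)
  rcases eq_or_ne (η x) 0 with hx | hx
  · simp [hx]
  have hEx := (hE x).le
  calc
    η x ^ 2 * E x * (2 * max (v x) 0) * (m x * v' x)
      ≤ η x ^ 2 * E x * (2 * max (v x) 0) * ∑ y ∈ S, ω x y * (v y - v x) := by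
        gcongr
        exact hv x hx
    _ = ∑ y ∈ S, ω x y * (2 * (η x ^ 2 * E x * (max (v x) 0 * (v y - v x)))) := by
        rw [Finset.mul_sum]
        exact Finset.sum_congr rfl fun y _ => by ring
    _ ≤ ∑ y ∈ S, ω x y * (2 * (η x ^ 2 * E x *
          (max (v x) 0 * (max (v y) 0 - max (v x) 0)))) := by
        gcongr ∑ y ∈ S, ?_ * (2 * (?_ * ?_)) with y
        · exact hω_nonneg x y
        · exact max_zero_mul_sub_le (v x) (v y)

end FixedTime

section Evolution

variable {G : Type*} {S : Finset G} {ω : G → G → ℝ} {η m : G → ℝ}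

theorem hasDerivAt_sum_mul_sq_max_zero_mul_exp {v v' ξ ξ' : G → ℝ → ℝ} {t : ℝ}
    (hv : ∀ x, HasDerivAt (v x) (v' x t) t) (hξ : ∀ x, HasDerivAt (ξ x) (ξ' x t) t) :
    HasDerivAt (fun r => ∑ x ∈ S, m x * (max (v x r) 0 ^ 2 * Real.exp (ξ x r)))
      (∑ x ∈ S, m x * (2 * max (v x t) 0 * v' x t * Real.exp (ξ x t)
        + max (v x t) 0 ^ 2 * (Real.exp (ξ x t) * ξ' x t))) t :=
  .fun_sum fun x _ => .const_mul (m x) <|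
    ((hasDerivAt_sq_max_zero (v x t)).comp t (hv x)).mul (hξ x).exp

theorem sum_sub_sum_le_integral_of_subsolution (hω_symm : ∀ x y, ω x y = ω y x)
    (hω_nonneg : ∀ x y, 0 ≤ ω x y) {a b : ℝ} (hab : a ≤ b) {v v' ξ ξ' : G → ℝ → ℝ}
    (hv_cont : ∀ x, ContinuousOn (v x) (Set.Icc a b))
    (hv_deriv : ∀ x, ∀ t ∈ Set.Ioo a b, HasDerivAt (v x) (v' x t) t)
    (hv : ∀ x, η x ≠ 0 → ∀ t ∈ Set.Ioo a b,
      m x * v' x t ≤ ∑ y ∈ S, ω x y * (v y t - v x t))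
    (hξ_cont : ∀ x, ContinuousOn (ξ x) (Set.Icc a b))
    (hξ'_cont : ∀ x, ContinuousOn (ξ' x) (Set.Icc a b))
    (hξ_deriv : ∀ x, ∀ t ∈ Set.Ioo a b, HasDerivAt (ξ x) (ξ' x t) t)
    (hmono : ∀ x y, 0 < ω x y → ∀ t ∈ Set.Ioo a b,
      0 ≤ (η y ^ 2 - η x ^ 2) * (Real.exp (ξ y t) - Real.exp (ξ x t))) :
    (∑ x ∈ S, m x * η x ^ 2 * (max (v x b) 0 ^ 2 * Real.exp (ξ x b)))
      - (∑ x ∈ S, m x * η x ^ 2 * (max (v x a) 0 ^ 2 * Real.exp (ξ x a)))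
    ≤ (∫ t in a..b, ∑ x ∈ S, max (v x t) 0 ^ 2 * η x ^ 2 * Real.exp (ξ x t) *
          (m x * ξ' x t + 1 / 2 * ∑ y ∈ S, ω x y * (1 - Real.exp (ξ y t - ξ x t)) ^ 2))
      + 2 * ∫ t in a..b, ∑ x ∈ S, ∑ y ∈ S,
          max (v x t) 0 ^ 2 * Real.exp (ξ y t) * (η y - η x) ^ 2 * ω x y := by
  have vertex_cont : ContinuousOn (fun t => ∑ x ∈ S,
      max (v x t) 0 ^ 2 * η x ^ 2 * Real.exp (ξ x t) *
        (m x * ξ' x t + 1 / 2 * ∑ y ∈ S, ω x y * (1 - Real.exp (ξ y t - ξ x t)) ^ 2))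
      (Set.Icc a b) := by fun_prop
  have edge_cont : ContinuousOn (fun t => 2 * ∑ x ∈ S, ∑ y ∈ S,
      max (v x t) 0 ^ 2 * Real.exp (ξ y t) * (η y - η x) ^ 2 * ω x y) (Set.Icc a b) := by
    fun_prop
  rw [← intervalIntegral.integral_const_mul, ← intervalIntegral.integral_add
    (vertex_cont.intervalIntegrable_of_Icc hab) (edge_cont.intervalIntegrable_of_Icc hab)]
  refine intervalIntegral.sub_le_integral_of_hasDeriv_right_of_le hab
    (g := fun t => ∑ x ∈ S, m x * η x ^ 2 * (max (v x t) 0 ^ 2 * Real.exp (ξ x t)))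
    (by fun_prop)
    (fun t ht => (hasDerivAt_sum_mul_sq_max_zero_mul_exp (fun x => hv_deriv x t ht)
      (fun x => hξ_deriv x t ht)).hasDerivWithinAt)
    (vertex_cont.add edge_cont).integrableOn_Icc fun t ht => ?_
  have testing := caccioppoli_sum_max_zero_le_of_subsolution hω_symm hω_nonneg
    (fun x => Real.exp_pos (ξ x t)) (fun x y hxy => hmono x y hxy t ht)
    (fun x hx => hv x hx t ht)
  simp only [← Real.exp_sub] at testing
  calc
    ∑ x ∈ S, m x * η x ^ 2 * (2 * max (v x t) 0 * v' x t * Real.exp (ξ x t)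
        + max (v x t) 0 ^ 2 * (Real.exp (ξ x t) * ξ' x t))
      = (∑ x ∈ S, η x ^ 2 * Real.exp (ξ x t) * (2 * max (v x t) 0) * (m x * v' x t))
        + ∑ x ∈ S, max (v x t) 0 ^ 2 * η x ^ 2 * Real.exp (ξ x t) * (m x * ξ' x t) := by
        rw [← Finset.sum_add_distrib]
        exact Finset.sum_congr rfl fun x _ => by ring
    _ ≤ _ := by
        simp only [mul_add _ (m _ * ξ' _ t), Finset.sum_add_distrib]
        linarith

end Evolution

section Laplacian

variable {G : Type*}

/-- The Laplacian `Δf(x) = μ(x)⁻¹ ∑_y ω(x,y) (f(y) - f(x))` of the weighted graph with node measure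
`μ` and edge weight `ω`; the sum has the junk value `0` when it does not converge, which cannot
happen at a vertex with finitely many neighbours. -/
noncomputable def weightedLaplacian (μ : G → ℝ) (ω : G → G → ℝ) (f : G → ℝ) (x : G) : ℝ :=
  (μ x)⁻¹ * ∑' y, ω x y * (f y - f x)

theorem weightedLaplacian_const_mul_sub_const (μ : G → ℝ) (ω : G → G → ℝ) (f : G → ℝ) (a b : ℝ)
    (x : G) :
    weightedLaplacian μ ω (fun y => a * f y - b) x = a * weightedLaplacian μ ω f x := by
  have difference (y : G) : ω x y * (a * f y - b - (a * f x - b)) = a * (ω x y * (f y - f x)) := by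
    ring
  simp only [weightedLaplacian, difference, tsum_mul_left, mul_left_comm]

theorem mul_weightedLaplacian_eq_sum {μ : G → ℝ} {ω : G → G → ℝ} {x : G} (hμ : μ x ≠ 0)
    {S : Finset G} (hS : ∀ y ∉ S, ω x y = 0) (f : G → ℝ) :
    μ x * weightedLaplacian μ ω f x = ∑ y ∈ S, ω x y * (f y - f x) := by
  rw [weightedLaplacian, mul_inv_cancel_left₀ hμ,
    tsum_eq_sum fun y hy => by rw [hS y hy, zero_mul]]

end Laplacian

section Localization

theorem exists_finset_mem_and_neighbors_mem {G M N : Type*} [Zero M] [Zero N] {ω : G → G → M}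
    {η : G → N} (hη_fin : (Function.support η).Finite)
    (hloc : ∀ x, η x ≠ 0 → {y | ω x y ≠ 0}.Finite) :
    ∃ S : Finset G, (∀ x, η x ≠ 0 → x ∈ S) ∧ ∀ x y, η x ≠ 0 → ω x y ≠ 0 → y ∈ S := by
  have hfin : (Function.support η ∪ ⋃ x ∈ Function.support η, {y | ω x y ≠ 0}).Finite :=
    hη_fin.union (hη_fin.biUnion hloc)
  refine ⟨hfin.toFinset, fun x hx => hfin.mem_toFinset.2 (.inl hx), fun x y hx hxy => ?_⟩
  exact hfin.mem_toFinset.2 (.inr (Set.mem_biUnion hx hxy))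

variable {G R : Type*} [CommRing R] [TopologicalSpace R] {ω : G → G → R} {η : G → R} {S : Finset G}

theorem tsum_mul_add_tsum_eq_sum (hS : ∀ x, η x ≠ 0 → x ∈ S)
    (hS_nbr : ∀ x y, η x ≠ 0 → ω x y ≠ 0 → y ∈ S) (f g h : G → R) (k : G → G → R) (c : R) :
    ∑' x, f x * η x ^ 2 * g x * (h x + c * ∑' y, ω x y * k x y) =
      ∑ x ∈ S, f x * η x ^ 2 * g x * (h x + c * ∑ y ∈ S, ω x y * k x y) := by
  rw [tsum_eq_sum (s := S) fun x hx => by simp [not_imp_comm.1 (hS x) hx]]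
  refine Finset.sum_congr rfl fun x _ => ?_
  rcases eq_or_ne (η x) 0 with hx | hx
  · simp [hx]
  · rw [tsum_eq_sum fun y hy => by rw [not_imp_comm.1 (hS_nbr x y hx) hy, zero_mul]]

theorem tsum_prod_mul_sq_sub_eq_sum_sum (hω_symm : ∀ x y, ω x y = ω y x)
    (hS : ∀ x, η x ≠ 0 → x ∈ S) (hS_nbr : ∀ x y, η x ≠ 0 → ω x y ≠ 0 → y ∈ S) (f g : G → R) :
    ∑' p : G × G, f p.1 * g p.2 * (η p.2 - η p.1) ^ 2 * ω p.1 p.2 =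
      ∑ x ∈ S, ∑ y ∈ S, f x * g y * (η y - η x) ^ 2 * ω x y := by
  rw [tsum_eq_sum (s := S ×ˢ S), Finset.sum_product]
  rintro ⟨x, y⟩ hxy
  rcases eq_or_ne (ω x y) 0 with hω | hω
  · simp [hω]
  have hx : η x = 0 := by
    by_contra hx
    exact hxy (Finset.mk_mem_product (hS x hx) (hS_nbr x y hx hω))
  have hy : η y = 0 := by
    by_contra hy
    exact hxy (Finset.mk_mem_product (hS_nbr y x hy (hω_symm x y ▸ hω)) (hS y hy))
  simp [hx, hy]

end Localization

theorem stmt6_general {G : Type*} {μ : G → ℝ} {ω : G → G → ℝ} (hμ : ∀ x, 0 < μ x)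
    (hω_symm : ∀ x y, ω x y = ω y x) (hω_nonneg : ∀ x y, 0 ≤ ω x y)
    {η : G → ℝ} (hη_fin : (Function.support η).Finite)
    (hloc : ∀ x, η x ≠ 0 → {y | 0 < ω x y}.Finite)
    (V : G → ℝ) {a b : ℝ} (hab : a < b) {v v' ξ : G → ℝ → ℝ}
    (hv_cont : ∀ x, ContinuousOn (v x) (Set.Icc a b))
    (hv_deriv : ∀ x, ∀ t ∈ Set.Ioo a b, HasDerivAt (v x) (v' x t) t)
    (hv : ∀ x, η x ≠ 0 → ∀ t ∈ Set.Ioo a b,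
      V x * v' x t ≤ weightedLaplacian μ ω (fun y => v y t) x)
    (hξ : ∀ x, ContDiffOn ℝ 1 (ξ x) (Set.Icc a b))
    (hmono : ∀ x y, 0 < ω x y → ∀ t ∈ Set.Ioo a b,
      0 ≤ (η y ^ 2 - η x ^ 2) * (Real.exp (ξ y t) - Real.exp (ξ x t))) :
    (∑' x, V x * η x ^ 2 * max (v x b) 0 ^ 2 * Real.exp (ξ x b) * μ x)
      - (∑' x, V x * η x ^ 2 * max (v x a) 0 ^ 2 * Real.exp (ξ x a) * μ x)
    ≤ (∫ t in a..b, ∑' x, max (v x t) 0 ^ 2 * η x ^ 2 * Real.exp (ξ x t) *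
          (V x * derivWithin (ξ x) (Set.Icc a b) t * μ x
            + 1 / 2 * ∑' y, ω x y * (1 - Real.exp (ξ y t - ξ x t)) ^ 2))
      + 2 * ∫ t in a..b, ∑' p : G × G,
          max (v p.1 t) 0 ^ 2 * Real.exp (ξ p.2 t) * (η p.2 - η p.1) ^ 2 * ω p.1 p.2 := by
  simp only [(hω_nonneg _ _).lt_iff_ne'] at hloc
  obtain ⟨S, hS, hS_nbr⟩ := exists_finset_mem_and_neighbors_mem hη_fin hloc
  have energy_eq (t : ℝ) : ∑' x, V x * η x ^ 2 * max (v x t) 0 ^ 2 * Real.exp (ξ x t) * μ x =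
      ∑ x ∈ S, μ x * V x * η x ^ 2 * (max (v x t) 0 ^ 2 * Real.exp (ξ x t)) := by
    rw [tsum_eq_sum (s := S) fun x hx => by simp [not_imp_comm.1 (hS x) hx]]
    exact Finset.sum_congr rfl fun x _ => by ring
  have subsolution (x : G) (hx : η x ≠ 0) (t : ℝ) (ht : t ∈ Set.Ioo a b) :
      μ x * V x * v' x t ≤ ∑ y ∈ S, ω x y * (v y t - v x t) := by
    rw [mul_assoc, ← mul_weightedLaplacian_eq_sum (hμ x).ne'
      fun y => not_imp_comm.1 (hS_nbr x y hx)]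
    exact mul_le_mul_of_nonneg_left (hv x hx t ht) (hμ x).le
  have hξ_deriv (x : G) (t : ℝ) (ht : t ∈ Set.Ioo a b) :
      HasDerivAt (ξ x) (derivWithin (ξ x) (Set.Icc a b) t) t :=
    ((hξ x).differentiableOn one_ne_zero t (Set.Ioo_subset_Icc_self ht)).hasDerivWithinAt.hasDerivAt
      (Icc_mem_nhds ht.1 ht.2)
  have gradient_eq (t : ℝ) := tsum_prod_mul_sq_sub_eq_sum_sum hω_symm hS hS_nbr
    (fun x => max (v x t) 0 ^ 2) fun y => Real.exp (ξ y t)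
  simp only [energy_eq, gradient_eq, tsum_mul_add_tsum_eq_sum hS hS_nbr,
    mul_right_comm (V _) _ (μ _), mul_comm (V _) (μ _)]
  exact sum_sub_sum_le_integral_of_subsolution hω_symm hω_nonneg hab.le hv_cont hv_deriv subsolution
    (fun x => (hξ x).continuousOn)
    (fun x => (hξ x).continuousOn_derivWithin (uniqueDiffOn_Icc hab) le_rfl) hξ_deriv hmono

/-- **Proposition 4.1** (a priori estimate). For a solution `u` of `Δu − Vu = 0` with
`0 ≤ u ≤ 1`, with `v(x,t) = eᵗ u(x) − 1`, a nonnegative finitely supported `η` and a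
test function `ξ` (with `ξ(x,·) ∈ C¹([0,T])`) such that
`(η²(y) − η²(x))(e^{ξ(y,t)} − e^{ξ(x,t)}) ≥ 0` whenever `x ∼ y`, the key a priori
estimate (4.5) for `v₊` holds. -/
theorem stmt6 {G : Type*} [Countable G] [Infinite G]
    (μ : G → ℝ) (ω : G → G → ℝ) (d : G → G → ℝ)
    (hμ : ∀ x, 0 < μ x)
    (hω_symm : ∀ x y, ω x y = ω y x)
    (hω_diag : ∀ x, ω x x = 0)
    (hω_nonneg : ∀ x y, 0 ≤ ω x y)
    (hω_sum : ∀ x, Summable fun y => ω x y)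
    (hloc : ∀ x : G, {y : G | 0 < ω x y}.Finite)
    (hconn : ∀ x y : G, x ≠ y → ∃ (n : ℕ) (p : ℕ → G),
      p 0 = x ∧ p n = y ∧ ∀ i < n, 0 < ω (p i) (p (i + 1)))
    (hd_symm : ∀ x y, d x y = d y x)
    (hd_diag : ∀ x, d x x = 0)
    (hd_nonneg : ∀ x y, 0 ≤ d x y)
    (hd_tri : ∀ x y z, d x y ≤ d x z + d z y)
    (s : ℝ) (hs : ∀ x y, 0 < ω x y → d x y ≤ s)
    (hballs : ∀ (x : G) (r : ℝ), {y : G | d y x < r}.Finite)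
    (V : G → ℝ) (hV₀ : ∀ x, 0 ≤ V x)
    (u : G → ℝ) (hu₀ : ∀ x, 0 ≤ u x) (hu₁ : ∀ x, u x ≤ 1)
    (hu_eq : ∀ x : G, (μ x)⁻¹ * (∑' y, ω x y * (u y - u x)) - V x * u x = 0)
    (T : ℝ) (hT : 0 < T)
    (η : G → ℝ) (hη₀ : ∀ x, 0 ≤ η x) (hη_fin : (Function.support η).Finite)
    (ξ : G → ℝ → ℝ) (hξC1 : ∀ x : G, ContDiffOn ℝ 1 (ξ x) (Set.Icc 0 T))
    (hcomp : ∀ x y : G, 0 < ω x y → ∀ t ∈ Set.Icc (0 : ℝ) T,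
      0 ≤ (η y ^ 2 - η x ^ 2) * (Real.exp (ξ y t) - Real.exp (ξ x t))) :
    (∑' x : G, V x * η x ^ 2 * (max (Real.exp T * u x - 1) 0) ^ 2
        * Real.exp (ξ x T) * μ x)
      - (∑' x : G, V x * η x ^ 2 * (max (Real.exp 0 * u x - 1) 0) ^ 2
        * Real.exp (ξ x 0) * μ x)
    ≤ (∫ t in (0 : ℝ)..T, ∑' x : G,
          (max (Real.exp t * u x - 1) 0) ^ 2 * η x ^ 2 * Real.exp (ξ x t) *
            (V x * derivWithin (ξ x) (Set.Icc 0 T) t * μ x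
              + (1 / 2) * ∑' y : G, ω x y * (1 - Real.exp (ξ y t - ξ x t)) ^ 2))
      + 2 * ∫ t in (0 : ℝ)..T, ∑' p : G × G,
          (max (Real.exp t * u p.1 - 1) 0) ^ 2 * Real.exp (ξ p.2 t)
            * (η p.2 - η p.1) ^ 2 * ω p.1 p.2 := by
  refine stmt6_general (v := fun x t => Real.exp t * u x - 1) (v' := fun x t => Real.exp t * u x)
    hμ hω_symm hω_nonneg hη_fin (fun x _ => hloc x) V hT (fun x => by fun_prop)
    (fun x t _ => ((Real.hasDerivAt_exp t).mul_const (u x)).sub_const 1) (fun x _ t _ => ?_) hξC1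
    fun x y hxy t ht => hcomp x y hxy t (Set.Ioo_subset_Icc_self ht)
  rw [weightedLaplacian_const_mul_sub_const, weightedLaplacian, sub_eq_zero.1 (hu_eq x),
    mul_left_comm]
end
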